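/- Let (α_n, β_n, γ_n)_{n≥0} be a stationary and ergodic sequence of triples of non-negative random variables. If E|log α₀| < ∞, E|log β₀| < ∞ and E log⁺ γ₀ < ∞, then almost surely limsup_{n→∞} (1/n) log(γ_n Σ_{k=0}^{n} α₀⋯α_{k−1} β_k⋯β_{n−1}) ≤ max{E log α₀, E log β₀} (where the product over an empty range equals 1). -/

import Mathlib

/-!
The proof rests on the upper half of Birkhoff's ergodic theorem: if `f` is integrable with negative
integral, then its Birkhoff sums are almost surely bounded above (`ae_bddAbove_birkhoffSum`).
Applied to `±(f - ∫ f) - ε` this gives `|S_n f - n ∫ f| ≤ n ε + C` for all `n`, with a random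
constant `C` (`ae_exists_abs_birkhoffSum_sub_le`).

Write `A = E log α₀`, `B = E log β₀`. Since `x ≤ exp (log x)` for `x ≥ 0` (also at `x = 0`, where
`Real.log 0 = 0`), the `k`-th summand is at most `exp (S_k log a + S_n log b - S_k log b)`, and the
exponent is at most `k A + (n - k) B + 3 n ε + C ≤ n max A B + 3 n ε + C`. The
factor `γ_n` is at most `exp (log⁺ γ_n)`, and `log⁺ γ_n` is the increment of a Birkhoff sum, hence
at most `2 n ε + C`. So the whole expression is at most
`(n + 1) exp (n (max A B + 5 ε) + C)`; take logarithms, divide by `n`, and let `ε → 0`.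
-/

open MeasureTheory Filter
open scoped ENNReal Topology

noncomputable section

/-- `log⁺ x = max (log x) 0`. -/
def plog (x : ℝ) : ℝ := max (Real.log x) 0

/-- The running maximum `max_{0 ≤ k ≤ n} S_k f` of Birkhoff sums, in its recursive form. -/
def runningMax {Ω : Type*} (T : Ω → Ω) (f : Ω → ℝ) : ℕ → Ω → ℝ
  | 0, _ => 0
  | n + 1, ω => max 0 (f ω + runningMax T f n (T ω))

section RunningMax

variable {Ω : Type*} {T : Ω → Ω} {f : Ω → ℝ}

lemma runningMax_nonneg (n : ℕ) (ω : Ω) : 0 ≤ runningMax T f n ω := by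
  cases n <;> simp [runningMax]

lemma birkhoffSum_le_runningMax (n : ℕ) (ω : Ω) :
    birkhoffSum T f n ω ≤ runningMax T f n ω := by
  induction n generalizing ω with
  | zero => simp [runningMax]
  | succ n ih =>
    rw [birkhoffSum_succ', runningMax]
    exact le_max_of_le_right (by linarith [ih (T ω)])

lemma runningMax_le_succ (n : ℕ) (ω : Ω) :
    runningMax T f n ω ≤ runningMax T f (n + 1) ω := by
  induction n generalizing ω with
  | zero => simp [runningMax]
  | succ n ih =>
    rw [runningMax, runningMax]
    exact max_le_max le_rfl (by linarith [ih (T ω)])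

lemma monotone_runningMax (ω : Ω) : Monotone fun n => runningMax T f n ω :=
  monotone_nat_of_le_succ fun n => runningMax_le_succ n ω

/-- Boundedness of the running maxima is a property of the whole orbit: this makes the exceptional
set strictly invariant. -/
lemma bddAbove_runningMax_comp (ω : Ω) :
    BddAbove (Set.range fun n => runningMax T f n (T ω)) ↔
      BddAbove (Set.range fun n => runningMax T f n ω) := by
  constructor
  · rintro ⟨C, hC⟩
    refine ⟨max 0 (f ω + C), ?_⟩
    rintro _ ⟨n, rfl⟩
    refine (runningMax_le_succ n ω).trans ?_
    exact max_le_max le_rfl (by linarith [hC ⟨n, rfl⟩])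
  · rintro ⟨C, hC⟩
    refine ⟨C - f ω, ?_⟩
    rintro _ ⟨n, rfl⟩
    have h : runningMax T f (n + 1) ω ≤ C := hC ⟨n + 1, rfl⟩
    have h' : f ω + runningMax T f n (T ω) ≤ C := (le_max_right _ _).trans h
    simp only
    linarith

variable [MeasurableSpace Ω] {μ : Measure Ω}

lemma measurable_runningMax (hT : Measurable T) (hf : Measurable f) (n : ℕ) :
    Measurable (runningMax T f n) := by
  induction n with
  | zero => exact measurable_const
  | succ n ih => exact measurable_const.max (hf.add (ih.comp hT))

lemma integrable_runningMax [IsProbabilityMeasure μ] (hT : MeasurePreserving T μ μ)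
    (hf : Integrable f μ) (n : ℕ) : Integrable (runningMax T f n) μ := by
  induction n with
  | zero => exact integrable_zero _ _ _
  | succ n ih =>
    exact (integrable_zero _ _ _).sup (hf.add (hT.integrable_comp_of_integrable ih))

end RunningMax

section Birkhoff

variable {Ω : Type*} [MeasurableSpace Ω] {μ : Measure Ω} [IsProbabilityMeasure μ]
  {T : Ω → Ω} {f : Ω → ℝ}

/-- Upper half of Birkhoff's theorem. By ergodicity the running maxima `M_n` are either a.s. bounded
or a.s. unbounded; in the second case `M_{n+1} - M_n ∘ T = max (-M_n ∘ T) f` tends to `f`, dominated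
by `|f|`, while its integral `∫ (M_{n+1} - M_n)` is nonnegative, contradicting `∫ f < 0`. -/
lemma ae_bddAbove_birkhoffSum (hT : Ergodic T μ) (hfm : Measurable f) (hf : Integrable f μ)
    (hneg : ∫ ω, f ω ∂μ < 0) :
    ∀ᵐ ω ∂μ, ∃ C, ∀ n, birkhoffSum T f n ω ≤ C := by
  have hTm : Measurable T := hT.measurable
  have hTp : MeasurePreserving T μ μ := hT.toMeasurePreserving
  set E : Set Ω := {ω | BddAbove (Set.range fun n => runningMax T f n ω)} with hE
  have hEm : MeasurableSet E :=
    measurableSet_bddAbove_range fun n => measurable_runningMax hTm hfm n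
  have hEinv : T ⁻¹' E = E := by
    ext ω
    exact bddAbove_runningMax_comp ω
  have hcases := hT.toPreErgodic.ae_empty_or_univ hEm hEinv
  rcases hcases with h0 | h1
  · exfalso
    have hae : ∀ᵐ ω ∂μ, ω ∉ E := by
      filter_upwards [h0] with ω hω hmem
      exact (hω.mp hmem)
    have hlim : Tendsto (fun n => ∫ ω, max (-runningMax T f n (T ω)) (f ω) ∂μ) atTop
        (𝓝 (∫ ω, f ω ∂μ)) := by
      refine tendsto_integral_of_dominated_convergence (fun ω => |f ω|) ?_ hf.abs ?_ ?_
      · intro n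
        exact (((measurable_runningMax hTm hfm n).comp hTm).neg.max hfm).aestronglyMeasurable
      · intro n
        refine Eventually.of_forall fun ω => ?_
        have h := runningMax_nonneg (T := T) (f := f) n (T ω)
        rw [Real.norm_eq_abs, abs_le]
        exact ⟨(neg_abs_le _).trans (le_max_right _ _),
          max_le (by linarith [abs_nonneg (f ω)]) (le_abs_self _)⟩
      · filter_upwards [hae] with ω hω
        have hω' : ¬ BddAbove (Set.range fun n => runningMax T f n (T ω)) := by
          rwa [bddAbove_runningMax_comp]
        have htop := (tendsto_atTop_atTop_of_monotone' (monotone_runningMax (T ω)) hω')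
        refine tendsto_const_nhds.congr' ?_
        filter_upwards [htop.eventually_ge_atTop (-f ω)] with n hn
        exact (max_eq_right (by linarith)).symm
    refine absurd (ge_of_tendsto' hlim fun n => ?_) (not_le.mpr hneg)
    have hi := integrable_runningMax hTp hf (n := n)
    have hi' := integrable_runningMax hTp hf (n := n + 1)
    have hiT : Integrable (fun ω => runningMax T f n (T ω)) μ :=
      hTp.integrable_comp_of_integrable hi
    have heq : ∀ ω, max (-runningMax T f n (T ω)) (f ω)
        = runningMax T f (n + 1) ω - runningMax T f n (T ω) := by
      intro ω
      rw [runningMax, ← max_sub_sub_right, zero_sub, add_sub_cancel_right]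
    simp_rw [heq]
    have hmap : ∫ ω, runningMax T f n (T ω) ∂μ = ∫ ω, runningMax T f n ω ∂μ := by
      conv_rhs => rw [← hTp.map_eq]
      rw [integral_map hTm.aemeasurable
        (measurable_runningMax hTm hfm n).aestronglyMeasurable]
    rw [integral_sub hi' hiT, hmap, sub_nonneg]
    exact integral_mono hi hi' fun ω => runningMax_le_succ n ω
  · filter_upwards [h1] with ω hω
    obtain ⟨C, hC⟩ := (hω.mpr trivial : ω ∈ E)
    exact ⟨C, fun n => (birkhoffSum_le_runningMax n ω).trans (hC ⟨n, rfl⟩)⟩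

lemma ae_exists_birkhoffSum_le (hT : Ergodic T μ) (hfm : Measurable f) (hf : Integrable f μ)
    {ε : ℝ} (hε : 0 < ε) :
    ∀ᵐ ω ∂μ, ∃ C, ∀ n : ℕ, birkhoffSum T f n ω ≤ n * (∫ x, f x ∂μ) + n * ε + C := by
  have h := ae_bddAbove_birkhoffSum (f := fun ω => f ω - (∫ x, f x ∂μ + ε)) hT
    (hfm.sub_const _) (hf.sub (integrable_const _)) (by
      rw [integral_sub hf (integrable_const _)]
      simp [hε])
  filter_upwards [h] with ω ⟨C, hC⟩
  refine ⟨C, fun n => ?_⟩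
  have := hC n
  simp only [birkhoffSum, Finset.sum_sub_distrib, Finset.sum_const, Finset.card_range,
    nsmul_eq_mul] at this ⊢
  linarith

/-- Birkhoff's theorem in quantitative form: a linear error term with arbitrarily small slope. -/
lemma ae_exists_abs_birkhoffSum_sub_le (hT : Ergodic T μ) (hfm : Measurable f)
    (hf : Integrable f μ) {ε : ℝ} (hε : 0 < ε) :
    ∀ᵐ ω ∂μ, ∃ C, ∀ n : ℕ, |birkhoffSum T f n ω - n * (∫ x, f x ∂μ)| ≤ n * ε + C := by
  filter_upwards [ae_exists_birkhoffSum_le hT hfm hf hε,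
    ae_exists_birkhoffSum_le (f := fun ω => -f ω) hT hfm.neg hf.neg hε] with ω ⟨C, hC⟩ ⟨D, hD⟩
  refine ⟨max C D, fun n => ?_⟩
  have h1 := hC n
  have h2 := hD n
  rw [integral_neg] at h2
  simp only [birkhoffSum, Finset.sum_neg_distrib] at h1 h2 ⊢
  rw [abs_le]
  constructor <;> linarith [le_max_left C D, le_max_right C D]

end Birkhoff

lemma le_exp_log' {x : ℝ} (hx : 0 ≤ x) : x ≤ Real.exp (Real.log x) := by
  rcases hx.eq_or_lt with rfl | h
  · simp
  · rw [Real.exp_log h]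

/-- The deterministic bound on the weighted sum, given linear control of the sums of logarithms and
of the logarithm of the prefactor. -/
lemma weighted_sum_le {u v : ℕ → ℝ} {y A B p ε C D K : ℝ} (n : ℕ) (hu : ∀ i, 0 ≤ u i)
    (hv : ∀ i, 0 ≤ v i) (hε : 0 < ε) (hyp : y ≤ Real.exp p)
    (hp : p ≤ 2 * n * ε + K)
    (hA : ∀ k : ℕ, |∑ i ∈ Finset.range k, Real.log (u i) - k * A| ≤ k * ε + C)
    (hB : ∀ k : ℕ, |∑ i ∈ Finset.range k, Real.log (v i) - k * B| ≤ k * ε + D) :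
    y * ∑ k ∈ Finset.range (n + 1),
        (∏ i ∈ Finset.range k, u i) * ∏ i ∈ Finset.Ico k n, v i
      ≤ (n + 1) * Real.exp (n * (max A B + 5 * ε) + (C + 2 * D + K)) := by
  have hterm : ∀ k ∈ Finset.range (n + 1),
      (∏ i ∈ Finset.range k, u i) * ∏ i ∈ Finset.Ico k n, v i
        ≤ Real.exp (n * (max A B + 3 * ε) + (C + 2 * D)) := by
    intro k hk
    have hkn : k ≤ n := Nat.lt_succ_iff.mp (Finset.mem_range.mp hk)
    have h1 : ∏ i ∈ Finset.range k, u i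
        ≤ Real.exp (∑ i ∈ Finset.range k, Real.log (u i)) := by
      rw [Real.exp_sum]
      exact Finset.prod_le_prod (fun i _ => hu i) fun i _ => le_exp_log' (hu i)
    have h2 : ∏ i ∈ Finset.Ico k n, v i
        ≤ Real.exp (∑ i ∈ Finset.Ico k n, Real.log (v i)) := by
      rw [Real.exp_sum]
      exact Finset.prod_le_prod (fun i _ => hv i) fun i _ => le_exp_log' (hv i)
    refine (mul_le_mul h1 h2 (Finset.prod_nonneg fun i _ => hv i) (Real.exp_pos _).le).trans ?_
    rw [← Real.exp_add, Real.exp_le_exp, Finset.sum_Ico_eq_sub _ hkn]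
    have a1 := (abs_le.mp (hA k)).2
    have b1 := (abs_le.mp (hB n)).2
    have b2 := (abs_le.mp (hB k)).1
    have hk' : (k : ℝ) ≤ n := by exact_mod_cast hkn
    have hk0 : (0 : ℝ) ≤ k := k.cast_nonneg
    have m1 : (k : ℝ) * A ≤ k * max A B := mul_le_mul_of_nonneg_left (le_max_left _ _) hk0
    have m2 : ((n : ℝ) - k) * B ≤ (n - k) * max A B :=
      mul_le_mul_of_nonneg_left (le_max_right _ _) (by linarith)
    have m3 : (k : ℝ) * ε ≤ n * ε := mul_le_mul_of_nonneg_right hk' hε.le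
    linarith
  have hsum := Finset.sum_le_card_nsmul _ _ _ hterm
  rw [Finset.card_range, nsmul_eq_mul] at hsum
  have hsum0 : 0 ≤ ∑ k ∈ Finset.range (n + 1),
      (∏ i ∈ Finset.range k, u i) * ∏ i ∈ Finset.Ico k n, v i :=
    Finset.sum_nonneg fun k _ => mul_nonneg (Finset.prod_nonneg fun i _ => hu i)
      (Finset.prod_nonneg fun i _ => hv i)
  refine (mul_le_mul (hyp.trans (Real.exp_le_exp.mpr hp)) hsum hsum0
    (Real.exp_pos _).le).trans (le_of_eq ?_)
  push_cast
  rw [mul_left_comm, ← Real.exp_add]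
  congr 2
  ring

/-- Passage from an exponential bound with linear prefactor to the exponential growth rate. -/
lemma limsup_log_le_of_le_exp {x : ℕ → ℝ} {R C : ℝ}
    (hx : ∀ n : ℕ, x n ≤ (n + 1) * Real.exp (n * R + C)) :
    Filter.limsup (fun n : ℕ => (((n : ℝ)⁻¹ : ℝ) : EReal) * ENNReal.log (ENNReal.ofReal (x n)))
      Filter.atTop ≤ (R : EReal) := by
  have hlog : Tendsto (fun n : ℕ => (n : ℝ)⁻¹ * Real.log (n + 1)) atTop (𝓝 0) := by
    have h1 : Tendsto (fun n : ℕ => Real.log ((n : ℝ) + 1) / ((n : ℝ) + 1)) atTop (𝓝 0) :=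
      (Real.isLittleO_log_id_atTop.tendsto_div_nhds_zero).comp
        (tendsto_atTop_add_const_right _ _ tendsto_natCast_atTop_atTop)
    have h2 : Tendsto (fun n : ℕ => 1 + (n : ℝ)⁻¹) atTop (𝓝 (1 + 0)) :=
      tendsto_const_nhds.add tendsto_inv_atTop_nhds_zero_nat
    have h3 := h1.mul h2
    rw [zero_mul] at h3
    refine h3.congr' ?_
    filter_upwards [eventually_gt_atTop 0] with n hn
    have : (0 : ℝ) < n := by exact_mod_cast hn
    field_simp
  have hlim : Tendsto (fun n : ℕ => (n : ℝ)⁻¹ * Real.log (n + 1) + (R + (n : ℝ)⁻¹ * C)) atTop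
      (𝓝 R) := by
    have h := hlog.add ((tendsto_const_nhds (x := R)).add
      ((tendsto_inv_atTop_nhds_zero_nat (𝕜 := ℝ)).mul_const C))
    simpa using h
  have hlimE := (continuous_coe_real_ereal.tendsto R).comp hlim
  rw [← hlimE.limsup_eq]
  refine limsup_le_limsup ?_
  filter_upwards [eventually_gt_atTop 0] with n hn
  have hn' : (0 : ℝ) < n := by exact_mod_cast hn
  have hpos : (0 : ℝ) < (n + 1) * Real.exp (n * R + C) := by positivity
  have hle : ENNReal.log (ENNReal.ofReal (x n))
      ≤ ((Real.log (n + 1) + (n * R + C) : ℝ) : EReal) := by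
    refine (ENNReal.log_monotone (ENNReal.ofReal_le_ofReal (hx n))).trans (le_of_eq ?_)
    rw [ENNReal.log_ofReal_of_pos hpos, Real.log_mul (by positivity) (Real.exp_pos _).ne',
      Real.log_exp]
  refine (mul_le_mul_of_nonneg_left hle (by exact_mod_cast (inv_pos.mpr hn').le)).trans
    (le_of_eq ?_)
  rw [← EReal.coe_mul, Function.comp_apply]
  congr 1
  field_simp

/-- **Lemma (wh19, Lemma 2.1).**
Let `(α_n, β_n, γ_n)_{n ≥ 0}` be a stationary and ergodic sequence of triples of
non-negative random variables, realized as `(a, b, g) ∘ T^n` for an ergodic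
measure-preserving transformation `T`.  If `E|log α₀| < ∞`, `E|log β₀| < ∞` and
`E log⁺ γ₀ < ∞`, then almost surely
`limsup_n (1/n) log (γ_n ∑_{k=0}^{n} α₀⋯α_{k−1} β_k⋯β_{n−1}) ≤ max (E log α₀) (E log β₀)`
(the logarithm is taken in `[-∞,∞]`, i.e. `log 0 = -∞`). -/
theorem limsup_log_weighted_sums_le_max
    {Ω : Type*} [MeasurableSpace Ω] {μ : Measure Ω} [IsProbabilityMeasure μ]
    {T : Ω → Ω} (hT : Ergodic T μ)
    (a b g : Ω → ℝ) (hma : Measurable a) (hmb : Measurable b) (hmg : Measurable g)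
    (ha : ∀ ω, 0 ≤ a ω) (hb : ∀ ω, 0 ≤ b ω) (hg : ∀ ω, 0 ≤ g ω)
    (hia : Integrable (fun ω => Real.log (a ω)) μ)
    (hib : Integrable (fun ω => Real.log (b ω)) μ)
    (hig : Integrable (fun ω => plog (g ω)) μ) :
    ∀ᵐ ω ∂μ,
      Filter.limsup (fun n : ℕ =>
          (((n : ℝ)⁻¹ : ℝ) : EReal) * ENNReal.log (ENNReal.ofReal
            (g (T^[n] ω) * ∑ k ∈ Finset.range (n + 1),
              (∏ i ∈ Finset.range k, a (T^[i] ω)) *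
                ∏ i ∈ Finset.Ico k n, b (T^[i] ω))))
          Filter.atTop
        ≤ ((max (∫ ω, Real.log (a ω) ∂μ) (∫ ω, Real.log (b ω) ∂μ) : ℝ) : EReal) := by
  have hkey : ∀ ε : ℝ, 0 < ε → ∀ᵐ ω ∂μ, Filter.limsup (fun n : ℕ =>
          (((n : ℝ)⁻¹ : ℝ) : EReal) * ENNReal.log (ENNReal.ofReal
            (g (T^[n] ω) * ∑ k ∈ Finset.range (n + 1),
              (∏ i ∈ Finset.range k, a (T^[i] ω)) *
                ∏ i ∈ Finset.Ico k n, b (T^[i] ω)))) Filter.atTop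
        ≤ ((max (∫ ω, Real.log (a ω) ∂μ) (∫ ω, Real.log (b ω) ∂μ) + 5 * ε : ℝ) : EReal) := by
    intro ε hε
    have hmp : Measurable fun ω => plog (g ω) := hmg.log.max measurable_const
    filter_upwards [ae_exists_abs_birkhoffSum_sub_le hT hma.log hia hε,
      ae_exists_abs_birkhoffSum_sub_le hT hmb.log hib hε,
      ae_exists_abs_birkhoffSum_sub_le hT hmp hig hε] with ω ⟨C, hC⟩ ⟨D, hD⟩ ⟨K, hK⟩
    refine limsup_log_le_of_le_exp
      (C := C + 2 * D + (2 * K + ε + ∫ x, plog (g x) ∂μ)) fun n => ?_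
    refine weighted_sum_le (u := fun i => a (T^[i] ω)) (v := fun i => b (T^[i] ω))
      (p := plog (g (T^[n] ω))) n (fun i => ha _) (fun i => hb _) hε ?_ ?_ hC hD
    · exact (le_exp_log' (hg _)).trans (Real.exp_le_exp.mpr (le_max_left _ _))
    · have h1 := (abs_le.mp (hK (n + 1))).2
      have h2 := (abs_le.mp (hK n)).1
      rw [birkhoffSum_succ] at h1
      push_cast at h1
      linarith
  have hall : ∀ᵐ ω ∂μ, ∀ j : ℕ, _ :=
    ae_all_iff.mpr fun j : ℕ => hkey (1 / ((j : ℝ) + 1)) (by positivity)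
  filter_upwards [hall] with ω hω
  refine ge_of_tendsto' (x := atTop) ((continuous_coe_real_ereal.tendsto _).comp ?_) hω
  simpa using (tendsto_one_div_add_atTop_nhds_zero_nat (𝕜 := ℝ)).const_mul 5 |>.const_add
    (max (∫ ω, Real.log (a ω) ∂μ) (∫ ω, Real.log (b ω) ∂μ))

end
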